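/- The map Spin(4) → Spin(3) × Spin(3) sending u + 𝕀v ↦ (u+v, u−v) is a group isomorphism, where every element of Spin(4) ⊂ Cl(4)⁰ is written uniquely as u + 𝕀v with u, v in the quaternion subalgebra spanned by 1, e₁e₂, e₂e₃, e₃e₁ and 𝕀 = e₁e₂e₃e₄; consequently Spin(4) ≅ Spin(3) × Spin(3). -/

import Mathlib

open scoped Quaternion

/-- The negative definite standard quadratic form `-q₄` on `ℝ⁴`. -/
noncomputable def Qneg4 : QuadraticForm ℝ (Fin 4 → ℝ) :=
  QuadraticMap.weightedSumSquares ℝ (fun _ : Fin 4 => (-1 : ℝ))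

/-- The image of the `i`-th standard basis vector of `ℝ⁴` in `Cl(4)`. -/
noncomputable def e (i : Fin 4) : CliffordAlgebra Qneg4 :=
  CliffordAlgebra.ι Qneg4 (Pi.single i 1)

/-- The embedding of the quaternions into `Cl(4)⁰`, sending `1, i, j, k` to
`1, e₁e₂, e₂e₃, e₃e₁`. -/
noncomputable def qmap (x : ℍ[ℝ]) : CliffordAlgebra Qneg4 :=
  algebraMap ℝ _ x.re + x.imI • (e 0 * e 1) + x.imJ • (e 1 * e 2) + x.imK • (e 2 * e 0)

/-- `𝕀 = e₁e₂e₃e₄ ∈ Cl(4)⁰`. -/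
noncomputable def I4 : CliffordAlgebra Qneg4 := e 0 * e 1 * e 2 * e 3

lemma Qneg4_apply (m : Fin 4 → ℝ) :
    Qneg4 m = -(m 0 * m 0 + m 1 * m 1 + m 2 * m 2 + m 3 * m 3) := by
  simp [Qneg4, QuadraticMap.weightedSumSquares_apply, Fin.sum_univ_four]

lemma e_mul_self (i : Fin 4) : e i * e i = -1 := by
  rw [e, CliffordAlgebra.ι_sq_scalar, Qneg4_apply]
  fin_cases i <;> simp

lemma e_mul_e_of_ne {i j : Fin 4} (h : i ≠ j) : e i * e j = -(e j * e i) := by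
  rw [eq_neg_iff_add_eq_zero, e, e, CliffordAlgebra.ι_mul_ι_add_swap, QuadraticMap.polar,
    Qneg4_apply, Qneg4_apply, Qneg4_apply]
  fin_cases i <;> fin_cases j <;> simp at h ⊢

lemma e_mul_self_assoc (i : Fin 4) (x : CliffordAlgebra Qneg4) : e i * (e i * x) = -x := by
  rw [← mul_assoc, e_mul_self, neg_one_mul]

lemma e_mul_e_assoc_of_ne {i j : Fin 4} (h : i ≠ j) (x : CliffordAlgebra Qneg4) :
    e i * (e j * x) = -(e j * (e i * x)) := by
  rw [← mul_assoc, e_mul_e_of_ne h, neg_mul, mul_assoc]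

lemma e10 : e 1 * e 0 = -(e 0 * e 1) := e_mul_e_of_ne (by decide)
lemma e20 : e 2 * e 0 = -(e 0 * e 2) := e_mul_e_of_ne (by decide)
lemma e30 : e 3 * e 0 = -(e 0 * e 3) := e_mul_e_of_ne (by decide)
lemma e21 : e 2 * e 1 = -(e 1 * e 2) := e_mul_e_of_ne (by decide)
lemma e31 : e 3 * e 1 = -(e 1 * e 3) := e_mul_e_of_ne (by decide)
lemma e32 : e 3 * e 2 = -(e 2 * e 3) := e_mul_e_of_ne (by decide)

lemma e10_assoc (x : CliffordAlgebra Qneg4) : e 1 * (e 0 * x) = -(e 0 * (e 1 * x)) :=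
  e_mul_e_assoc_of_ne (by decide) x
lemma e20_assoc (x : CliffordAlgebra Qneg4) : e 2 * (e 0 * x) = -(e 0 * (e 2 * x)) :=
  e_mul_e_assoc_of_ne (by decide) x
lemma e30_assoc (x : CliffordAlgebra Qneg4) : e 3 * (e 0 * x) = -(e 0 * (e 3 * x)) :=
  e_mul_e_assoc_of_ne (by decide) x
lemma e21_assoc (x : CliffordAlgebra Qneg4) : e 2 * (e 1 * x) = -(e 1 * (e 2 * x)) :=
  e_mul_e_assoc_of_ne (by decide) x
lemma e31_assoc (x : CliffordAlgebra Qneg4) : e 3 * (e 1 * x) = -(e 1 * (e 3 * x)) :=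
  e_mul_e_assoc_of_ne (by decide) x
lemma e32_assoc (x : CliffordAlgebra Qneg4) : e 3 * (e 2 * x) = -(e 2 * (e 3 * x)) :=
  e_mul_e_assoc_of_ne (by decide) x

/-- The bivectors `e₁e₂, e₂e₃, e₃e₁` satisfy the quaternion relations. -/
noncomputable def bivectorBasis :
    QuaternionAlgebra.Basis (CliffordAlgebra Qneg4) (-1 : ℝ) 0 (-1) where
  i := e 0 * e 1
  j := e 1 * e 2
  k := e 2 * e 0
  i_mul_i := by
    simp [mul_assoc, e_mul_self, e10_assoc]
  j_mul_j := by
    simp [mul_assoc, e_mul_self, e21_assoc]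
  i_mul_j := by
    simp [mul_assoc, e_mul_self_assoc, e20]
  j_mul_i := by
    simp [mul_assoc, e10_assoc, e20_assoc, e21, e_mul_self_assoc, e20]

/-- `qmap` as an algebra homomorphism. -/
noncomputable def qmapHom : ℍ[ℝ] →ₐ[ℝ] CliffordAlgebra Qneg4 := bivectorBasis.liftHom

lemma qmapHom_apply (x : ℍ[ℝ]) : qmapHom x = qmap x := rfl

lemma star_e (i : Fin 4) : star (e i) = -e i := CliffordAlgebra.star_ι _

lemma star_qmap (x : ℍ[ℝ]) : star (qmap x) = qmap (star x) := by
  simp [qmap, CliffordAlgebra.star_smul, CliffordAlgebra.star_algebraMap, star_e, e10, e21, e20]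

lemma I4_mul_self : I4 * I4 = 1 := by
  simp [I4, mul_assoc, e_mul_self, e10_assoc, e20_assoc, e30_assoc, e21_assoc, e31_assoc,
    e32_assoc]

lemma star_I4 : star I4 = I4 := by
  simp [I4, star_e, mul_assoc, e30, e31, e32, e10_assoc, e20_assoc, e21_assoc]

lemma I4_commute_qmap (x : ℍ[ℝ]) : Commute I4 (qmap x) := by
  have h (i : Fin 4) : I4 * e i = -(e i * I4) := by
    fin_cases i <;>
    simp [I4, mul_assoc, e_mul_self, e30, e31, e32, e10_assoc, e20_assoc, e30_assoc, e21_assoc,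
      e31_assoc, e32_assoc, e_mul_self_assoc]
  have h2 (i j : Fin 4) : Commute I4 (e i * e j) := by
    rw [commute_iff_eq, ← mul_assoc, h, neg_mul, mul_assoc, h, mul_neg, neg_neg, mul_assoc]
  exact (((Algebra.commute_algebraMap_right _ _).add_right ((h2 0 1).smul_right _)).add_right
    ((h2 1 2).smul_right _)).add_right ((h2 2 0).smul_right _)

/-- The algebra embedding `ℍ × ℍ → Cl(4)` with image `Cl(4)⁰`, inverse to
`u + 𝕀v ↦ (u + v, u - v)`. -/
noncomputable def prodHom : (ℍ[ℝ] × ℍ[ℝ]) →ₐ[ℝ] CliffordAlgebra Qneg4 :=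
  AlgHom.ofLinearMap
    ((1 / 2 : ℝ) • (qmapHom.toLinearMap.comp (LinearMap.fst ℝ ℍ[ℝ] ℍ[ℝ] + LinearMap.snd ℝ _ _) +
      (LinearMap.mulLeft ℝ I4).comp (qmapHom.toLinearMap.comp
        (LinearMap.fst ℝ ℍ[ℝ] ℍ[ℝ] - LinearMap.snd ℝ _ _))))
    (by
      simp
      rw [← two_smul ℝ, smul_smul]; norm_num)
    (by
      rintro ⟨a, b⟩ ⟨c, d⟩
      simp only [LinearMap.smul_apply, LinearMap.add_apply, LinearMap.comp_apply,
        LinearMap.sub_apply, LinearMap.fst_apply, LinearMap.snd_apply, AlgHom.toLinearMap_apply,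
        LinearMap.mulLeft_apply, Prod.mk_mul_mk, smul_mul_smul_comm]
      generalize hu : qmapHom (a + b) = u
      generalize hv : qmapHom (a - b) = v
      generalize hw : qmapHom (c + d) = w
      generalize hz : qmapHom (c - d) = z
      have cu : u * I4 = I4 * u := by rw [← hu]; exact (I4_commute_qmap _).symm.eq
      have cv : v * I4 = I4 * v := by rw [← hv]; exact (I4_commute_qmap _).symm.eq
      have h1 : qmapHom (a * c + b * d) = (1 / 2 : ℝ) • (u * w + v * z) := by
        rw [← hu, ← hv, ← hw, ← hz, ← map_mul, ← map_mul, ← map_add, ← map_smul]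
        congr 1
        rw [show (a + b) * (c + d) + (a - b) * (c - d) = (2 : ℝ) • (a * c + b * d) by
          rw [two_smul]; noncomm_ring, smul_smul]
        norm_num
      have h2 : qmapHom (a * c - b * d) = (1 / 2 : ℝ) • (u * z + v * w) := by
        rw [← hu, ← hv, ← hw, ← hz, ← map_mul, ← map_mul, ← map_add, ← map_smul]
        congr 1
        rw [show (a + b) * (c - d) + (a - b) * (c + d) = (2 : ℝ) • (a * c - b * d) by
          rw [two_smul]; noncomm_ring, smul_smul]
        norm_num
      have h3 : (u + I4 * v) * (w + I4 * z) = (u * w + v * z) + I4 * (u * z + v * w) := by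
        rw [add_mul, mul_add, mul_add, ← mul_assoc u, cu, mul_assoc I4 v, mul_assoc I4 v,
          ← mul_assoc v, cv, mul_assoc I4 v, ← mul_assoc I4 I4, I4_mul_self, one_mul, mul_add,
          mul_assoc I4 u]
        abel
      rw [h1, h2, h3, mul_smul_comm, ← smul_add, smul_smul])

lemma prodHom_apply (p : ℍ[ℝ] × ℍ[ℝ]) :
    prodHom p = (1 / 2 : ℝ) • (qmap (p.1 + p.2) + I4 * qmap (p.1 - p.2)) := rfl

lemma prodHom_add_sub (u v : ℍ[ℝ]) : prodHom (u + v, u - v) = qmap u + I4 * qmap v := by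
  rw [prodHom_apply]
  simp only [← qmapHom_apply]
  rw [show u + v + (u - v) = (2 : ℝ) • u by rw [two_smul]; abel,
    show u + v - (u - v) = (2 : ℝ) • v by rw [two_smul]; abel, map_smul, map_smul, mul_smul_comm,
    ← smul_add, smul_smul]
  norm_num

lemma star_prodHom (p : ℍ[ℝ] × ℍ[ℝ]) : star (prodHom p) = prodHom (star p) := by
  rw [prodHom_apply, prodHom_apply, CliffordAlgebra.star_smul, star_add, star_mul, star_I4,
    star_qmap, star_qmap, ← (I4_commute_qmap _).eq, star_add, star_sub]
  rfl

/-- The quaternion with given coordinates, as a term of type `ℍ[ℝ]`. -/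
def quat (a b c d : ℝ) : ℍ[ℝ] := ⟨a, b, c, d⟩

@[simp] lemma quat_re (a b c d : ℝ) : (quat a b c d).re = a := rfl
@[simp] lemma quat_imI (a b c d : ℝ) : (quat a b c d).imI = b := rfl
@[simp] lemma quat_imJ (a b c d : ℝ) : (quat a b c d).imJ = c := rfl
@[simp] lemma quat_imK (a b c d : ℝ) : (quat a b c d).imK = d := rfl

/-- The identification `ℝ⁴ ≅ ℍ` with `e₁, e₂, e₃, e₄ ↦ j, k, i, 1`. -/
noncomputable def vecQuat : (Fin 4 → ℝ) →ₗ[ℝ] ℍ[ℝ] where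
  toFun m := quat (m 3) (m 2) (m 0) (m 1)
  map_add' _ _ := rfl
  map_smul' r m := by
    apply Quaternion.ext <;> simp

@[simp] lemma vecQuat_re (m : Fin 4 → ℝ) : (vecQuat m).re = m 3 := rfl
@[simp] lemma vecQuat_imI (m : Fin 4 → ℝ) : (vecQuat m).imI = m 2 := rfl
@[simp] lemma vecQuat_imJ (m : Fin 4 → ℝ) : (vecQuat m).imJ = m 0 := rfl
@[simp] lemma vecQuat_imK (m : Fin 4 → ℝ) : (vecQuat m).imK = m 1 := rfl

lemma vecQuat_surjective : Function.Surjective vecQuat := fun q =>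
  ⟨![q.imJ, q.imK, q.imI, q.re], rfl⟩

lemma vecQuat_mul_star (m : Fin 4 → ℝ) :
    vecQuat m * star (vecQuat m) = ((-Qneg4 m : ℝ) : ℍ[ℝ]) := by
  rw [Quaternion.self_mul_star, Quaternion.normSq_def', Qneg4_apply]
  simp only [vecQuat_re, vecQuat_imI, vecQuat_imJ, vecQuat_imK]
  congr 1
  ring

/-- The representation of `Cl(4)` on `ℍ²`. -/
noncomputable def matrixRep : CliffordAlgebra Qneg4 →ₐ[ℝ] Matrix (Fin 2) (Fin 2) ℍ[ℝ] :=
  CliffordAlgebra.lift Qneg4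
    ⟨{ toFun m := !![0, vecQuat m; -star (vecQuat m), 0]
       map_add' m n := by
        refine Matrix.ext fun i j => ?_
        fin_cases i <;> fin_cases j <;> simp [add_comm]
       map_smul' r m := by
        refine Matrix.ext fun i j => ?_
        fin_cases i <;> fin_cases j <;> simp }, fun m => by
      have h := vecQuat_mul_star m
      have h' : star (vecQuat m) * vecQuat m = ((-Qneg4 m : ℝ) : ℍ[ℝ]) := by
        rw [← h, Quaternion.self_mul_star, Quaternion.star_mul_self]
      simp only [LinearMap.coe_mk, AddHom.coe_mk]
      rw [Matrix.mul_fin_two]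
      refine Matrix.ext fun i j => ?_
      fin_cases i <;> fin_cases j <;>
        simp [h, h', Matrix.algebraMap_matrix_apply, Quaternion.algebraMap_def]⟩

lemma matrixRep_ι (m : Fin 4 → ℝ) : matrixRep (CliffordAlgebra.ι Qneg4 m) =
    !![0, vecQuat m; -star (vecQuat m), 0] := by
  simp [matrixRep]

lemma matrixRep_ι_mul_ι (m n : Fin 4 → ℝ) :
    matrixRep (CliffordAlgebra.ι Qneg4 m * CliffordAlgebra.ι Qneg4 n) =
      !![-(vecQuat m * star (vecQuat n)), 0; 0, -(star (vecQuat m) * vecQuat n)] := by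
  simp [matrixRep_ι]

lemma matrixRep_e01 : matrixRep (e 0 * e 1) = !![quat 0 1 0 0, 0; 0, quat 0 1 0 0] := by
  rw [e, e, matrixRep_ι_mul_ι]
  congr <;> apply Quaternion.ext <;> simp

lemma matrixRep_e12 : matrixRep (e 1 * e 2) = !![quat 0 0 1 0, 0; 0, quat 0 0 1 0] := by
  rw [e, e, matrixRep_ι_mul_ι]
  congr <;> apply Quaternion.ext <;> simp

lemma matrixRep_e20 : matrixRep (e 2 * e 0) = !![quat 0 0 0 1, 0; 0, quat 0 0 0 1] := by
  rw [e, e, matrixRep_ι_mul_ι]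
  congr <;> apply Quaternion.ext <;> simp

lemma matrixRep_e23 : matrixRep (e 2 * e 3) = !![quat 0 (-1) 0 0, 0; 0, quat 0 1 0 0] := by
  rw [e, e, matrixRep_ι_mul_ι]
  congr <;> apply Quaternion.ext <;> simp

lemma matrixRep_I4 : matrixRep I4 = !![1, 0; 0, -1] := by
  rw [I4, mul_assoc, map_mul, matrixRep_e01, matrixRep_e23, Matrix.mul_fin_two]
  congr <;> apply Quaternion.ext <;> simp

lemma matrixRep_qmap (x : ℍ[ℝ]) : matrixRep (qmap x) = !![x, 0; 0, x] := by
  simp only [qmap, map_add, map_smul, matrixRep_e01, matrixRep_e12, matrixRep_e20,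
    AlgHom.commutes]
  refine Matrix.ext fun i j => ?_
  fin_cases i <;> fin_cases j <;> apply Quaternion.ext <;>
    simp [Matrix.algebraMap_matrix_apply, Quaternion.algebraMap_def]

lemma matrixRep_prodHom (p : ℍ[ℝ] × ℍ[ℝ]) : matrixRep (prodHom p) = !![p.1, 0; 0, p.2] := by
  rw [prodHom_apply, map_smul, map_add, map_mul, matrixRep_I4, matrixRep_qmap, matrixRep_qmap,
    Matrix.mul_fin_two]
  refine Matrix.ext fun i j => ?_
  fin_cases i <;> fin_cases j <;> apply Quaternion.ext <;> simp <;> ring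

lemma prodHom_injective : Function.Injective prodHom := by
  intro p q h
  have h' := congrArg matrixRep h
  rw [matrixRep_prodHom, matrixRep_prodHom] at h'
  exact Prod.ext (by simpa using congrFun (congrFun h' 0) 0)
    (by simpa using congrFun (congrFun h' 1) 1)

lemma ι_eq_sum (m : Fin 4 → ℝ) :
    CliffordAlgebra.ι Qneg4 m = m 0 • e 0 + m 1 • e 1 + m 2 • e 2 + m 3 • e 3 := by
  conv_lhs => rw [pi_eq_sum_univ' m, map_sum]
  simp only [map_smul, Fin.sum_univ_four]
  congr

lemma prodHom_vecQuat (m n : Fin 4 → ℝ) :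
    prodHom (-(vecQuat m * star (vecQuat n)), -(star (vecQuat m) * vecQuat n)) =
      CliffordAlgebra.ι Qneg4 m * CliffordAlgebra.ι Qneg4 n := by
  rw [ι_eq_sum, ι_eq_sum, prodHom_apply]
  simp [qmap, I4, mul_add, add_mul, mul_assoc, Algebra.algebraMap_eq_smul_one, e_mul_self, e10,
    e20, e30, e21, e31, e32, e10_assoc, e20_assoc, e30_assoc, e21_assoc, e31_assoc,
    e_mul_self_assoc]
  module

lemma exists_prodHom_eq {x : CliffordAlgebra Qneg4} (hx : x ∈ CliffordAlgebra.even Qneg4) :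
    ∃ p, prodHom p = x := by
  change x ∈ CliffordAlgebra.evenOdd Qneg4 0 at hx
  induction x, hx using CliffordAlgebra.even_induction with
  | algebraMap r => exact ⟨algebraMap ℝ _ r, AlgHom.commutes _ r⟩
  | add x y hx hy ihx ihy =>
    obtain ⟨p, rfl⟩ := ihx
    obtain ⟨q, rfl⟩ := ihy
    exact ⟨p + q, map_add _ _ _⟩
  | ι_mul_ι_mul m₁ m₂ x hx ih =>
    obtain ⟨p, rfl⟩ := ih
    exact ⟨_ * p, by rw [map_mul, prodHom_vecQuat]⟩

lemma ι_mem_pinGroup {m : Fin 4 → ℝ} (hm : Qneg4 m = -1) :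
    CliffordAlgebra.ι Qneg4 m ∈ pinGroup Qneg4 := by
  have h : CliffordAlgebra.ι Qneg4 m * CliffordAlgebra.ι Qneg4 m = -1 := by
    rw [CliffordAlgebra.ι_sq_scalar, hm, map_neg, map_one]
  refine pinGroup.mem_iff.2 ⟨⟨⟨CliffordAlgebra.ι Qneg4 m, -CliffordAlgebra.ι Qneg4 m,
    by rw [mul_neg, h, neg_neg], by rw [neg_mul, h, neg_neg]⟩,
    Subgroup.subset_closure ⟨m, rfl⟩, rfl⟩, ?_⟩
  rw [Unitary.mem_iff, CliffordAlgebra.star_ι, neg_mul, mul_neg, h, neg_neg]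
  exact ⟨rfl, rfl⟩

lemma ι_mul_ι_mem_spinGroup {m n : Fin 4 → ℝ} (hm : Qneg4 m = -1) (hn : Qneg4 n = -1) :
    CliffordAlgebra.ι Qneg4 m * CliffordAlgebra.ι Qneg4 n ∈ spinGroup Qneg4 :=
  spinGroup.mem_iff.2 ⟨mul_mem (ι_mem_pinGroup hm) (ι_mem_pinGroup hn),
    CliffordAlgebra.ι_mul_ι_mem_evenOdd_zero _ _ _⟩

lemma mem_unitary_quaternion_iff {q : ℍ[ℝ]} : q ∈ unitary ℍ[ℝ] ↔ Quaternion.normSq q = 1 := by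
  rw [Unitary.mem_iff, Quaternion.self_mul_star, Quaternion.star_mul_self, and_self]
  rw [← Quaternion.coe_one, Quaternion.coe_inj]

lemma prodHom_mem_spinGroup_of_normSq {q w : ℍ[ℝ]} (hq : Quaternion.normSq q = 1)
    (hw : Quaternion.normSq w = 1) : prodHom (-(q * star w), -(star q * w)) ∈ spinGroup Qneg4 := by
  obtain ⟨m, rfl⟩ := vecQuat_surjective q
  obtain ⟨n, rfl⟩ := vecQuat_surjective w
  have key (k : Fin 4 → ℝ) (h : Quaternion.normSq (vecQuat k) = 1) : Qneg4 k = -1 := by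
    have := vecQuat_mul_star k
    rw [Quaternion.self_mul_star, h, Quaternion.coe_inj] at this
    linarith
  rw [prodHom_vecQuat]
  exact ι_mul_ι_mem_spinGroup (key m hq) (key n hw)

lemma prodHom_self_star_mem_spinGroup {q : ℍ[ℝ]} (hq : Quaternion.normSq q = 1) :
    prodHom (q, star q) ∈ spinGroup Qneg4 := by
  simpa using prodHom_mem_spinGroup_of_normSq (q := -q) (w := 1) (by simpa using hq) (by simp)

lemma exists_imaginary_unit_orthogonal (q : ℍ[ℝ]) :
    ∃ n : ℍ[ℝ], n.re = 0 ∧ Quaternion.normSq n = 1 ∧ (q * n).re = 0 := by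
  by_cases h : q.imI ^ 2 + q.imJ ^ 2 = 0
  · refine ⟨quat 0 1 0 0, rfl, by simp [Quaternion.normSq_def'], ?_⟩
    have : q.imI = 0 := by nlinarith [sq_nonneg q.imI, sq_nonneg q.imJ]
    simp [this]
  · have hs : √(q.imI ^ 2 + q.imJ ^ 2) ^ 2 = q.imI ^ 2 + q.imJ ^ 2 := Real.sq_sqrt (by positivity)
    set s := √(q.imI ^ 2 + q.imJ ^ 2)
    have hs0 : s ≠ 0 := by
      rintro h0
      rw [h0] at hs
      exact h (by rw [← hs]; norm_num)
    refine ⟨quat 0 (q.imJ / s) (-q.imI / s) 0, rfl, ?_, ?_⟩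
    · simp only [Quaternion.normSq_def', quat_re, quat_imI, quat_imJ, quat_imK]
      field_simp
      linarith
    · simp
      ring

lemma prodHom_diag_mem_spinGroup {q : ℍ[ℝ]} (hq : Quaternion.normSq q = 1) :
    prodHom (q, q) ∈ spinGroup Qneg4 := by
  obtain ⟨n, hn, hn1, hqn⟩ := exists_imaginary_unit_orthogonal q
  have h1 : star n = -n := by rwa [Quaternion.star_eq_neg]
  have h2 : star (q * n) = -(q * n) := by rwa [Quaternion.star_eq_neg]
  have h3 : n * n = -1 := by
    have := Quaternion.self_mul_star n
    rw [h1, hn1, mul_neg, Quaternion.coe_one] at this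
    rw [← this, neg_neg]
  have h := prodHom_mem_spinGroup_of_normSq (q := -(q * n)) (w := n)
    (by rw [Quaternion.normSq_neg, map_mul, hq, hn1, one_mul]) hn1
  rw [star_neg, h2, h1] at h
  simpa [mul_assoc, h3] using h

lemma exists_unit_sqrt {c : ℍ[ℝ]} (hc : Quaternion.normSq c = 1) :
    ∃ p : ℍ[ℝ], Quaternion.normSq p = 1 ∧ p * p = c := by
  by_cases h : 1 + c = 0
  · refine ⟨quat 0 1 0 0, by simp [Quaternion.normSq_def'], ?_⟩
    rw [← neg_eq_of_add_eq_zero_right h]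
    apply Quaternion.ext <;> simp
  · have hN : Quaternion.normSq (1 + c) ≠ 0 := Quaternion.normSq_ne_zero.2 h
    have hs : √(Quaternion.normSq (1 + c)) ^ 2 = Quaternion.normSq (1 + c) :=
      Real.sq_sqrt Quaternion.normSq_nonneg
    set s := √(Quaternion.normSq (1 + c))
    have hsq : (1 + c) * (1 + c) = Quaternion.normSq (1 + c) • c := by
      rw [Quaternion.normSq_def'] at hc ⊢
      apply Quaternion.ext <;> simp
      · linear_combination -(1 + c.re) * hc
      · linear_combination -c.imI * hc
      · linear_combination -c.imJ * hc
      · linear_combination -c.imK * hc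
    refine ⟨s⁻¹ • (1 + c), ?_, ?_⟩
    · rw [Quaternion.normSq_smul, inv_pow, hs, inv_mul_cancel₀ hN]
    · rw [smul_mul_smul_comm, hsq, ← mul_inv, ← sq, hs, smul_smul, inv_mul_cancel₀ hN, one_smul]

lemma prodHom_mem_spinGroup {a b : ℍ[ℝ]} (ha : a ∈ unitary ℍ[ℝ]) (hb : b ∈ unitary ℍ[ℝ]) :
    prodHom (a, b) ∈ spinGroup Qneg4 := by
  have ha' := mem_unitary_quaternion_iff.1 ha
  have hb' := mem_unitary_quaternion_iff.1 hb
  obtain ⟨p, hp, hpp⟩ := exists_unit_sqrt (c := star b * a) (by simp [ha', hb'])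
  have hpu := mem_unitary_quaternion_iff.2 hp
  have h := mul_mem (prodHom_diag_mem_spinGroup (q := b * p) (by simp [hb', hp]))
    (prodHom_self_star_mem_spinGroup hp)
  rwa [← map_mul, Prod.mk_mul_mk, mul_assoc, hpp, ← mul_assoc, Unitary.mul_star_self_of_mem hb,
    one_mul, mul_assoc, Unitary.mul_star_self_of_mem hpu, mul_one] at h

lemma exists_unitary_prodHom_eq {x : CliffordAlgebra Qneg4} (hx : x ∈ spinGroup Qneg4) :
    ∃ a ∈ unitary ℍ[ℝ], ∃ b ∈ unitary ℍ[ℝ], prodHom (a, b) = x := by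
  obtain ⟨⟨a, b⟩, rfl⟩ := exists_prodHom_eq (spinGroup.mem_even hx)
  have h1 := spinGroup.star_mul_self_of_mem hx
  have h2 := spinGroup.mul_star_self_of_mem hx
  rw [star_prodHom, ← map_mul, ← map_one prodHom] at h1 h2
  have h1 := Prod.ext_iff.1 (prodHom_injective h1)
  have h2 := Prod.ext_iff.1 (prodHom_injective h2)
  exact ⟨a, ⟨h1.1, h2.1⟩, b, ⟨h1.2, h2.2⟩, rfl⟩

/-- The homomorphism `Spin(3) × Spin(3) → Spin(4)`, `(a, b) ↦ (a + b)/2 + 𝕀(a - b)/2`. -/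
noncomputable def unitaryProdToSpin : (unitary ℍ[ℝ] × unitary ℍ[ℝ]) →* spinGroup Qneg4 where
  toFun p := ⟨prodHom (p.1, p.2), prodHom_mem_spinGroup p.1.2 p.2.2⟩
  map_one' := Subtype.ext (map_one prodHom)
  map_mul' p q := Subtype.ext (map_mul prodHom (p.1.1, p.2.1) (q.1.1, q.2.1))

lemma unitaryProdToSpin_bijective : Function.Bijective unitaryProdToSpin := by
  constructor
  · intro p q h
    have h := Prod.ext_iff.1 (prodHom_injective (Subtype.ext_iff.1 h))
    exact Prod.ext (Subtype.ext h.1) (Subtype.ext h.2)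
  · rintro ⟨x, hx⟩
    obtain ⟨a, ha, b, hb, rfl⟩ := exists_unitary_prodHom_eq hx
    exact ⟨(⟨a, ha⟩, ⟨b, hb⟩), rfl⟩

/-- Every element of `Spin(4)` is uniquely of the form `u + 𝕀v` with `u, v` quaternions, and
`u + 𝕀v ↦ (u+v, u−v)` is a group isomorphism `Spin(4) ≅ Spin(3) × Spin(3)`, where `Spin(3)` is
identified with the group of unit quaternions. -/
theorem stmt7 :
    (∀ x ∈ spinGroup Qneg4, ∃! p : ℍ[ℝ] × ℍ[ℝ], x = qmap p.1 + I4 * qmap p.2) ∧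
    ∃ f : spinGroup Qneg4 ≃* (unitary ℍ[ℝ] × unitary ℍ[ℝ]),
      ∀ (x : spinGroup Qneg4) (u v : ℍ[ℝ]),
        (x : CliffordAlgebra Qneg4) = qmap u + I4 * qmap v →
          ((f x).1 : ℍ[ℝ]) = u + v ∧ ((f x).2 : ℍ[ℝ]) = u - v := by
  refine ⟨fun x hx => ?_, (MulEquiv.ofBijective _ unitaryProdToSpin_bijective).symm,
    fun x u v hx => ?_⟩
  · obtain ⟨⟨a, b⟩, rfl⟩ := exists_prodHom_eq (spinGroup.mem_even hx)
    refine ⟨((1 / 2 : ℝ) • (a + b), (1 / 2 : ℝ) • (a - b)), ?_, ?_⟩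
    · dsimp only
      rw [← prodHom_add_sub]
      congr 2 <;> module
    · rintro ⟨u, v⟩ h
      dsimp only at h
      rw [← prodHom_add_sub] at h
      obtain ⟨rfl, rfl⟩ := Prod.mk.inj (prodHom_injective h)
      ext1 <;> dsimp only <;> module
  · obtain ⟨p, rfl⟩ := unitaryProdToSpin_bijective.2 x
    rw [← prodHom_add_sub] at hx
    have hp : (MulEquiv.ofBijective _ unitaryProdToSpin_bijective).symm (unitaryProdToSpin p) = p :=
      MulEquiv.symm_apply_apply (MulEquiv.ofBijective _ unitaryProdToSpin_bijective) p
    rw [hp]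
    exact Prod.mk.inj (prodHom_injective hx)
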